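/- arXiv:2210.10939 — 2 statements merged into one kernel-verified Lean document; each statement's English description precedes it below -/
import Mathlib

section
/- Suppose the family F(x,t), with F_0 = ∏_ν f_ν^{n_ν} (f_ν pairwise coprime monic), satisfies (α,δ_n)-Zd for f_ν = x. Then Δ(F,x)(0,t)_0 = (−1)^{n_ν(n_ν−1)/2} · n_ν^{n_ν} · δ_n(0)^{n_ν−1} · (∏_{ν'≠ν} f_{ν'}(0)^{n_{ν'}})^{n_ν−1} / α(0)^{n_ν−1}. -/
open Finset Polynomial

noncomputable section

/-- The limit of a Hahn (Puiseux) series as `t → 0`: the coefficient of the lowest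
power of `t` occurring in it (its leading coefficient). -/
def lim0 {L : Type*} [Field L] (f : HahnSeries ℚ L) : L := f.coeff f.order

/-- `s` is a Puiseux series with nonnegative support and constant term `a`
(i.e. `s(0) = a`). -/
def HasConst {L : Type*} [Field L] (s : HahnSeries ℚ L) (a : L) : Prop :=
  s.coeff 0 = a ∧ ∀ q < (0 : ℚ), s.coeff q = 0

/-- The natural ring map `A[[t]] → L((t^ℚ))` induced by `φ : A →+* L`. -/
def Phi {A L : Type*} [CommRing A] [Field L] (φ : A →+* L) :
    PowerSeries A →+* HahnSeries ℚ L :=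
  (HahnSeries.ofPowerSeries ℚ L).comp (PowerSeries.map φ)

/-- The polynomial with power-series coefficients determined by a family
`F(x,t) = Σ_i p_i(x) t^i` of polynomials of degree at most `n'`. -/
def fam {A : Type*} [CommRing A] (n' : ℕ) (p : ℕ → Polynomial A) :
    Polynomial (PowerSeries A) :=
  ∑ j ∈ Finset.range (n' + 1), Polynomial.C (PowerSeries.mk fun i => (p i).coeff j) * X ^ j

/-- `∏_{q ≠ q'} (S q − S q')`, the product of the differences of all (ordered) pairs of
distinct `t`-roots.  For a monic family it equals `(-1)^(N(N-1)/2)` times the discriminant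
`Δ_{A[[t]]}(F) = ∏_{q<q'} (S q − S q')²`; in particular it is nonzero iff
`Δ_{A[[t]]}(F) ≠ 0`. -/
def rootsSep {L : Type*} [Field L] {ι : Type*} [Fintype ι] [DecidableEq ι]
    (S : ι → HahnSeries ℚ L) : HahnSeries ℚ L :=
  ∏ q ∈ Finset.univ.offDiag, (S q.1 - S q.2)

/-- `Δ(F, f_ν)(a ν ℓ, t)_0`: the limit of the generalized formal discriminant of the family
with respect to `f_ν = ∏_ℓ (x − a ν ℓ)`, evaluated at `x = a ν ℓ`.  Here the `t`-roots
approaching the roots of `f_ν` are grouped as `s ν · i` for `i` in `Fin (n ν)`; following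
Definition 2.3, `s'_i(x) = f_ν(x) − ∏_ℓ (x − s ν ℓ i)`, so that
`s'_i(x) − s'_j(x) = ∏_ℓ (x − s ν ℓ j) − ∏_ℓ (x − s ν ℓ i)`, and
`Δ(F,f_ν)(x,t) = [∏_{others} (x − s_ℓ)]^(2 n ν − 2) ∏_{i<j} (s'_i − s'_j)²`. -/
def gdlim {L : Type*} [Field L] {m : ℕ} (d n : Fin m → ℕ)
    (a : (ν : Fin m) → Fin (d ν) → L)
    (s : (ν : Fin m) → (ℓ : Fin (d ν)) → Fin (n ν) → HahnSeries ℚ L)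
    (ν : Fin m) (ℓ : Fin (d ν)) : L :=
  lim0 ((∏ ν' ∈ Finset.univ.erase ν, ∏ ℓ', ∏ i', (HahnSeries.C (a ν ℓ) - s ν' ℓ' i')) ^
      (2 * n ν - 2) *
    ∏ q ∈ Finset.univ.filter (fun q : Fin (n ν) × Fin (n ν) => q.1 < q.2),
      ((∏ ℓ', (HahnSeries.C (a ν ℓ) - s ν ℓ' q.2)) -
        ∏ ℓ', (HahnSeries.C (a ν ℓ) - s ν ℓ' q.1)) ^ 2)

/-- The discriminant `Δ(f) = ∏_{ℓ<ℓ'} (a ℓ − a ℓ')²` of a monic split polynomial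
`f = ∏_ℓ (x − a ℓ)`. -/
def discOf {L : Type*} [Field L] {d : ℕ} (a : Fin d → L) : L :=
  ∏ q ∈ Finset.univ.filter (fun q : Fin d × Fin d => q.1 < q.2), (a q.1 - a q.2) ^ 2

/-- The vertex `ver(F)` of the family (Definition 3.1), computed from the root data:
`ver(F) = ∏_{ν,ℓ} Δ(F,f_ν)(a_{νℓ},t)_0 · ∏_{ν<ν'} res(f_ν,f_{ν'})^(2(n_ν+n_{ν'}−n_ν n_{ν'}))`,
where `res(f_ν, f_{ν'}) = ∏_{ℓ,ℓ'} (a ν ℓ − a ν' ℓ')`. -/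
def ver {L : Type*} [Field L] {m : ℕ} (d n : Fin m → ℕ)
    (a : (ν : Fin m) → Fin (d ν) → L)
    (s : (ν : Fin m) → (ℓ : Fin (d ν)) → Fin (n ν) → HahnSeries ℚ L) : L :=
  (∏ ν, ∏ ℓ, gdlim d n a s ν ℓ) *
    ∏ ν, ∏ ν' ∈ Finset.Ioi ν,
      (∏ ℓ, ∏ ℓ', (a ν ℓ - a ν' ℓ')) ^
        (2 * ((n ν : ℤ) + (n ν' : ℤ) - (n ν : ℤ) * (n ν' : ℤ)))

/-- `f = c t^r + higher order terms` (`c` may vanish). -/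
def Ld {L : Type*} [Field L] (r : ℚ) (c : L) (f : HahnSeries ℚ L) : Prop :=
  f.coeff r = c ∧ ∀ q < r, f.coeff q = 0

section helpers
variable {L : Type*} [Field L]

lemma Ld.mul {r r' : ℚ} {c c' : L} {f g : HahnSeries ℚ L} (hf : Ld r c f) (hg : Ld r' c' g) :
    Ld (r + r') (c * c') (f * g) := by
  have key : ∀ q ≤ r + r', ∀ ij ∈ Finset.antidiagonal f.isPWO_support g.isPWO_support q,
      q = r + r' ∧ ij = (r, r') := by
    intro q hq ij hij
    rw [Finset.mem_antidiagonal] at hij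
    obtain ⟨h1, h2, h3⟩ := hij
    have e1 : r ≤ ij.1 := by
      by_contra h
      exact h1 (hf.2 _ (not_le.1 h))
    have e2 : r' ≤ ij.2 := by
      by_contra h
      exact h2 (hg.2 _ (not_le.1 h))
    refine ⟨by linarith, Prod.ext ?_ ?_⟩ <;> simp only <;> linarith
  constructor
  · rw [HahnSeries.coeff_mul, ← hf.1, ← hg.1]
    rw [Finset.sum_eq_single (r, r')]
    · intro b hb hne
      exact absurd (key _ le_rfl b hb).2 hne
    · intro h
      rw [Finset.mem_antidiagonal] at h
      simp only [HahnSeries.mem_support, and_true, ne_eq] at h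
      by_cases h1 : f.coeff r = 0
      · simp [h1]
      · by_cases h2 : g.coeff r' = 0
        · simp [h2]
        · exact absurd ⟨h1, h2⟩ h
  · intro q hq
    rw [HahnSeries.coeff_mul]
    apply Finset.sum_eq_zero
    intro ij hij
    exact absurd (key q hq.le ij hij).1 hq.ne

lemma Ld.add {r : ℚ} {c c' : L} {f g : HahnSeries ℚ L} (hf : Ld r c f) (hg : Ld r c' g) :
    Ld r (c + c') (f + g) := by
  refine ⟨by simp [hf.1, hg.1], fun q hq => by simp [hf.2 q hq, hg.2 q hq]⟩

lemma Ld.neg {r : ℚ} {c : L} {f : HahnSeries ℚ L} (hf : Ld r c f) : Ld r (-c) (-f) := by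
  refine ⟨by simp [hf.1], fun q hq => by simp [hf.2 q hq]⟩

lemma Ld.sub {r : ℚ} {c c' : L} {f g : HahnSeries ℚ L} (hf : Ld r c f) (hg : Ld r c' g) :
    Ld r (c - c') (f - g) := by
  rw [sub_eq_add_neg, sub_eq_add_neg]
  exact hf.add hg.neg

lemma Ld.zero (r : ℚ) : Ld r (0 : L) 0 := ⟨by simp, fun q _ => by simp⟩

lemma Ld.Cc (c : L) : Ld 0 c (HahnSeries.C c) := by
  refine ⟨by simp [HahnSeries.C_apply], fun q hq => ?_⟩
  rw [HahnSeries.C_apply, HahnSeries.coeff_single_of_ne hq.ne]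

lemma Ld.one : Ld 0 (1 : L) 1 := by
  have := Ld.Cc (1 : L)
  simpa using this

lemma Ld.lower {r r' : ℚ} {c : L} {f : HahnSeries ℚ L} (hf : Ld r c f) (h : r' < r) :
    Ld r' 0 f := ⟨hf.2 _ h, fun q hq => hf.2 q (hq.trans h)⟩

lemma Ld.pow {r : ℚ} {c : L} {f : HahnSeries ℚ L} (hf : Ld r c f) (n : ℕ) :
    Ld (n * r) (c ^ n) (f ^ n) := by
  induction n with
  | zero => simpa using Ld.one
  | succ n ih =>
    have := ih.mul hf
    rw [pow_succ, pow_succ]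
    convert this using 1
    push_cast; ring

lemma Ld.pow0 {c : L} {f : HahnSeries ℚ L} (hf : Ld 0 c f) (n : ℕ) :
    Ld 0 (c ^ n) (f ^ n) := by
  simpa using hf.pow n

lemma Ld.prod {ι : Type*} (S : Finset ι) {r : ℚ} {c : ι → L} {f : ι → HahnSeries ℚ L}
    (hf : ∀ i ∈ S, Ld r (c i) (f i)) : Ld (S.card * r) (∏ i ∈ S, c i) (∏ i ∈ S, f i) := by
  classical
  induction S using Finset.induction_on with
  | empty => simpa using Ld.one
  | insert a S ha ih =>
    rw [Finset.prod_insert ha, Finset.prod_insert ha, Finset.card_insert_of_notMem ha]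
    have := (hf a (by simp)).mul (ih fun i hi => hf i (by simp [hi]))
    convert this using 1
    push_cast; ring

lemma Ld.prod0 {ι : Type*} (S : Finset ι) {c : ι → L} {f : ι → HahnSeries ℚ L}
    (hf : ∀ i ∈ S, Ld 0 (c i) (f i)) : Ld 0 (∏ i ∈ S, c i) (∏ i ∈ S, f i) := by
  simpa using Ld.prod S hf

lemma Ld.ne_zero {r : ℚ} {c : L} {f : HahnSeries ℚ L} (hf : Ld r c f) (hc : c ≠ 0) : f ≠ 0 := by
  rintro rfl
  exact hc (by simpa using hf.1.symm)

lemma Ld.uniq {r r' : ℚ} {c c' : L} {f : HahnSeries ℚ L} (hf : Ld r c f) (hf' : Ld r' c' f)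
    (hc : c ≠ 0) (hc' : c' ≠ 0) : r = r' ∧ c = c' := by
  have : r = r' := by
    rcases lt_trichotomy r r' with h | h | h
    · exact absurd (hf.1.symm.trans (hf'.2 _ h)) hc
    · exact h
    · exact absurd (hf'.1.symm.trans (hf.2 _ h)) hc'
  subst this
  exact ⟨rfl, hf.1.symm.trans hf'.1⟩

lemma Ld.exists {f : HahnSeries ℚ L} (hf : f ≠ 0) : ∃ r c, c ≠ 0 ∧ Ld r c f :=
  ⟨f.order, f.coeff f.order, by
    simpa using hf, rfl, fun q hq => HahnSeries.coeff_eq_zero_of_lt_order hq⟩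

lemma Ld.lim {r : ℚ} {c : L} {f : HahnSeries ℚ L} (hf : Ld r c f) (hc : c ≠ 0) : lim0 f = c := by
  have h0 := hf.ne_zero hc
  have h : Ld f.order (f.coeff f.order) f :=
    ⟨rfl, fun q hq => HahnSeries.coeff_eq_zero_of_lt_order hq⟩
  exact (h.uniq hf (by simpa using h0) hc).2

lemma Ld.inv {c : L} {f : HahnSeries ℚ L} (hf : Ld 0 c f) (hc : c ≠ 0) : Ld 0 c⁻¹ f⁻¹ := by
  have h0 := hf.ne_zero hc
  obtain ⟨r, d, hd, h⟩ := Ld.exists (inv_ne_zero h0)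
  have h1 := h.mul hf
  rw [inv_mul_cancel₀ h0] at h1
  obtain ⟨e1, e2⟩ := h1.uniq Ld.one (mul_ne_zero hd hc) one_ne_zero
  have : r = 0 := by linarith
  subst this
  rwa [← eq_inv_of_mul_eq_one_left e2]

lemma Ld.div {r : ℚ} {c d : L} {f g : HahnSeries ℚ L} (h : Ld r d (f * g)) (hg : Ld 0 c g)
    (hc : c ≠ 0) : Ld r (d / c) f := by
  have := h.mul (hg.inv hc)
  rw [mul_assoc, mul_inv_cancel₀ (hg.ne_zero hc), mul_one, add_zero] at this
  rwa [div_eq_mul_inv]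

lemma Ld.root {r : ℚ} {d : L} {f : HahnSeries ℚ L} {N : ℕ} (hN : N ≠ 0) (h : Ld r d (f ^ N))
    (hd : d ≠ 0) : ∃ c, c ^ N = d ∧ Ld (r / N) c f := by
  have h0 : f ≠ 0 := by
    rintro rfl
    exact h.ne_zero hd (by simp [hN])
  obtain ⟨r', c, hc, h1⟩ := Ld.exists h0
  obtain ⟨e1, e2⟩ := (h1.pow N).uniq h (pow_ne_zero _ hc) hd
  refine ⟨c, e2, ?_⟩
  have : r / N = r' := by
    rw [← e1]; field_simp
  rwa [this]

lemma Ld.T (k : ℕ) : Ld (k : ℚ) (1 : L) (HahnSeries.single (k : ℚ) 1) :=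
  ⟨by simp, fun q hq => HahnSeries.coeff_single_of_ne hq.ne⟩

variable {A : Type*} [CommRing A]

lemma Phi_X_pow (φ : A →+* L) (k : ℕ) :
    Phi φ (PowerSeries.X ^ k) = HahnSeries.single (k : ℚ) 1 := by
  simp [Phi, HahnSeries.ofPowerSeries_X_pow]

lemma Ld.Phi (φ : A →+* L) (a : PowerSeries A) :
    Ld 0 (φ (PowerSeries.constantCoeff a)) (Phi φ a) := by
  constructor
  · have := HahnSeries.ofPowerSeries_apply_coeff (Γ := ℚ) (PowerSeries.map φ a) 0
    simpa [_root_.Phi] using this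
  · intro q hq
    simp only [_root_.Phi, RingHom.comp_apply, HahnSeries.ofPowerSeries_apply]
    apply HahnSeries.embDomain_of_notMem_range
    rintro ⟨n, hn⟩
    simp at hn
    rw [← hn] at hq
    exact absurd hq (not_lt.2 (by positivity))

lemma Ld.eval (φ : A →+* L) (Q : Polynomial (PowerSeries A)) {s : HahnSeries ℚ L}
    (hs : Ld 0 0 s) :
    Ld 0 (φ (PowerSeries.constantCoeff (Q.coeff 0))) ((Q.map (_root_.Phi φ)).eval s) := by
  induction Q using Polynomial.induction_on' with
  | add p q hp hq =>
    simpa using hp.add hq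
  | monomial n a =>
    have := (Ld.Phi φ a).mul (hs.pow0 n)
    rw [add_zero] at this
    simp only [Polynomial.map_monomial, Polynomial.eval_monomial]
    convert this using 1
    rcases n with _ | n <;> simp [Polynomial.coeff_monomial]

lemma Ld.diffq (φ : A →+* L) (Q : Polynomial (PowerSeries A)) {s s' : HahnSeries ℚ L}
    (hs : Ld 0 0 s) (hs' : Ld 0 0 s') :
    ∃ u, Ld 0 (φ (PowerSeries.constantCoeff (Q.coeff 1))) u ∧
      (Q.map (_root_.Phi φ)).eval s - (Q.map (_root_.Phi φ)).eval s' = (s - s') * u := by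
  induction Q using Polynomial.induction_on' with
  | add p q hp hq =>
    obtain ⟨u, hu, eu⟩ := hp
    obtain ⟨v, hv, ev⟩ := hq
    refine ⟨u + v, by simpa using hu.add hv, ?_⟩
    simp only [Polynomial.map_add, Polynomial.eval_add]
    linear_combination eu + ev
  | monomial n a =>
    have key : ∃ u, Ld 0 (if n = 1 then 1 else 0) u ∧ s ^ n - s' ^ n = (s - s') * u := by
      induction n with
      | zero => exact ⟨0, by simpa using Ld.zero 0, by simp⟩
      | succ n ih =>
        obtain ⟨u, hu, eu⟩ := ih
        refine ⟨s ^ n + s' * u, ?_, by linear_combination s' * eu⟩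
        have := (hs.pow0 n).add (by simpa using hs'.mul hu)
        convert this using 1
        rcases n with _ | n <;> simp
    obtain ⟨u, hu, eu⟩ := key
    refine ⟨_root_.Phi φ a * u, ?_, ?_⟩
    · have := (Ld.Phi φ a).mul hu
      rw [add_zero] at this
      convert this using 1
      by_cases h : n = 1 <;> simp [Polynomial.coeff_monomial, h]
    · simp only [Polynomial.map_monomial, Polynomial.eval_monomial]
      linear_combination (_root_.Phi φ a) * eu

/-- The swap map `A[[t]][x] → A[x][[t]]`. -/
def Sw (A : Type*) [CommRing A] : Polynomial (PowerSeries A) →+* PowerSeries (Polynomial A) :=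
  Polynomial.eval₂RingHom (PowerSeries.map Polynomial.C) (PowerSeries.C Polynomial.X)

lemma Sw_coeff (Q : Polynomial (PowerSeries A)) (m k : ℕ) :
    (PowerSeries.coeff m (Sw A Q)).coeff k = PowerSeries.coeff m (Q.coeff k) := by
  induction Q using Polynomial.induction_on' with
  | add p q hp hq => simp [hp, hq]
  | monomial n a =>
    simp only [Sw, Polynomial.coe_eval₂RingHom, Polynomial.eval₂_monomial]
    rw [← map_pow, PowerSeries.coeff_mul_C, PowerSeries.coeff_map, Polynomial.coeff_C_mul_X_pow,
      Polynomial.coeff_monomial]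
    by_cases h : n = k
    · simp [h]
    · simp [h, Ne.symm h]

lemma dvd_of_Sw (Q : Polynomial (PowerSeries A)) (n : ℕ)
    (h : ∀ m ≤ n, PowerSeries.coeff m (Sw A Q) = 0) :
    Polynomial.C (PowerSeries.X ^ (n + 1)) ∣ Q := by
  rw [Polynomial.C_dvd_iff_dvd_coeff]
  intro k
  rw [PowerSeries.X_pow_dvd_iff]
  intro m hm
  rw [← Sw_coeff, h m (by omega)]
  simp

lemma Sw_ext {Q : Polynomial (PowerSeries A)} {f : PowerSeries (Polynomial A)}
    (h : ∀ m k, PowerSeries.coeff m (Q.coeff k) = (PowerSeries.coeff m f).coeff k) :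
    Sw A Q = f := by
  ext m k
  rw [Sw_coeff, h]

lemma coeff_fam (n' : ℕ) (p : ℕ → Polynomial A) (hdeg : ∀ i, (p i).natDegree ≤ n') (m k : ℕ) :
    PowerSeries.coeff m ((fam n' p).coeff k) = (p m).coeff k := by
  simp only [fam, Polynomial.finsetSum_coeff, Polynomial.coeff_C_mul_X_pow]
  rw [Finset.sum_ite_eq]
  split_ifs with h
  · simp
  · simp at h
    rw [Polynomial.coeff_eq_zero_of_natDegree_lt (by have := hdeg m; omega)]
    simp

lemma Sw_fam (n' : ℕ) (p : ℕ → Polynomial A) (hdeg : ∀ i, (p i).natDegree ≤ n') :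
    Sw A (fam n' p) = PowerSeries.mk p :=
  Sw_ext fun m k => by rw [coeff_fam n' p hdeg, PowerSeries.coeff_mk]

lemma Sw_const (a : Polynomial A) : Sw A (a.map PowerSeries.C) = PowerSeries.C a :=
  Sw_ext fun m k => by
    rw [Polynomial.coeff_map, PowerSeries.coeff_C, PowerSeries.coeff_C]
    split_ifs <;> simp

lemma pairs_prod {N : ℕ} {R : Type*} [CommRing R] (s : Fin N → R) :
    ∏ q ∈ Finset.univ.filter (fun q : Fin N × Fin N => q.1 < q.2), (s q.1 - s q.2) ^ 2 =
      (-1) ^ (N * (N - 1) / 2) * ∏ i, ∏ j ∈ Finset.univ.erase i, (s i - s j) := by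
  have e1 : ∏ i, ∏ j ∈ Finset.univ.erase i, (s i - s j) =
      ∏ q ∈ Finset.univ.filter (fun q : Fin N × Fin N => q.1 ≠ q.2), (s q.1 - s q.2) := by
    rw [Finset.prod_filter, Fintype.prod_prod_type]
    refine Finset.prod_congr rfl fun i _ => ?_
    rw [← Finset.prod_filter]
    refine Finset.prod_congr ?_ fun _ _ => rfl
    ext j; simp [eq_comm]
  have e2 : ∏ q ∈ Finset.univ.filter (fun q : Fin N × Fin N => q.1 ≠ q.2), (s q.1 - s q.2) =
      (∏ q ∈ Finset.univ.filter (fun q : Fin N × Fin N => q.1 < q.2), (s q.1 - s q.2)) *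
      ∏ q ∈ Finset.univ.filter (fun q : Fin N × Fin N => q.2 < q.1), (s q.1 - s q.2) := by
    rw [← Finset.prod_union]
    · refine Finset.prod_congr ?_ fun _ _ => rfl
      ext q; simp [lt_or_lt_iff_ne]
    · rw [Finset.disjoint_filter]
      intro q _ h; exact h.le.not_gt
  have e3 : ∏ q ∈ Finset.univ.filter (fun q : Fin N × Fin N => q.2 < q.1), (s q.1 - s q.2) =
      ∏ q ∈ Finset.univ.filter (fun q : Fin N × Fin N => q.1 < q.2), (s q.2 - s q.1) := by
    refine Finset.prod_nbij' Prod.swap Prod.swap ?_ ?_ ?_ ?_ ?_ <;> simp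
  have e4 : (Finset.univ.filter (fun q : Fin N × Fin N => q.1 < q.2)).card = N * (N - 1) / 2 := by
    rw [Finset.card_filter, Fintype.sum_prod_type]
    simp only [← Finset.card_filter]
    have : ∀ i : Fin N, (Finset.univ.filter (fun j => i < j)).card = N - 1 - i := by
      intro i
      rw [← Fin.card_Ioi]
      congr 1
      ext j; simp
    simp only [this]
    rw [Fin.sum_univ_eq_sum_range (fun i => N - 1 - i) N, Finset.sum_range_reflect (fun i => i),
      Finset.sum_range_id]
  rw [e1, e2, e3, ← e4, ← Finset.prod_const, ← Finset.prod_mul_distrib, ← Finset.prod_mul_distrib]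
  exact Finset.prod_congr rfl fun q _ => by ring

lemma prod_roots {N : ℕ} (hN : 1 < N) (c : Fin N → L) (hc : Function.Injective c) (d : L)
    (h : ∀ i, c i ^ N = -d) : (∏ i, c i) ^ (N - 1) = d ^ (N - 1) := by
  have e : ∏ i, (X - C (c i)) = X ^ N + C d := by
    symm
    apply Polynomial.eq_of_monic_of_dvd_of_natDegree_le
      (Polynomial.monic_prod_of_monic Finset.univ (fun i => X - C (c i))
        fun i _ => Polynomial.monic_X_sub_C (c i))
      (Polynomial.monic_X_pow_add_C d (by omega))
    · apply Finset.prod_dvd_of_coprime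
      · intro i _ j _ hij
        exact Polynomial.pairwise_coprime_X_sub_C hc hij
      · intro i _
        rw [Polynomial.dvd_iff_isRoot]
        simp [h i]
    · rw [Polynomial.natDegree_X_pow_add_C]
      simp
  have e' := congrArg (Polynomial.eval 0) e
  rw [Polynomial.eval_prod] at e'
  simp only [Polynomial.eval_sub, Polynomial.eval_X, Polynomial.eval_C, zero_sub,
    Polynomial.eval_add, Polynomial.eval_pow] at e'
  rw [zero_pow (by omega), zero_add, Finset.prod_neg] at e'
  rw [← e', mul_pow, ← pow_mul, Even.neg_one_pow, one_mul]
  simpa using Nat.even_mul_pred_self N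

end helpers

/-- **Lemma 3.6.**  Suppose the family `F(x,t) = Σ p_i(x) tⁱ`, with
`F_0 = x^N · ∏_j g_j^{M_j}` (the `g_j` pairwise coprime monic, coprime to `x`),
satisfies `(α, δ)`-Zd for the factor `f_ν = x`:
`α·F = (x β₀ + β₁ t + ⋯ + β_{nd−1} t^{nd−1})^N + δ t^{nd} + O(t^{nd+1})` with
`gcd(αδ, x) = 1` (i.e. `(αδ)(0) ≠ 0`) and `N > 1`.  Then
`Δ(F,x)(0,t)_0 = (−1)^{N(N−1)/2} N^N δ(0)^{N−1} (∏_j g_j(0)^{M_j})^{N−1} / α(0)^{N−1}`. -/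
theorem stmt7 {A L : Type*} [CommRing A] [IsDomain A]
    [Field L] [IsAlgClosed L] [CharZero L]
    (φ : A →+* L) (hφ : Function.Injective φ)
    (n' N : ℕ) (hN : 1 < N)
    (mg : ℕ) (g : Fin mg → Polynomial A) (Mg dg : Fin mg → ℕ)
    (hgmonic : ∀ j, (g j).Monic)
    (rg : (j : Fin mg) → Fin (dg j) → L)
    (hgfac : ∀ j, (g j).map φ = ∏ ℓ, (X - C (rg j ℓ)))
    (hrg : ∀ j ℓ, rg j ℓ ≠ 0)
    (hrgInj : Function.Injective fun q : Σ j, Fin (dg j) => rg q.1 q.2)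
    (p : ℕ → Polynomial A) (hdeg : ∀ i, (p i).natDegree ≤ n')
    (hF0 : p 0 = X ^ N * ∏ j, g j ^ Mg j)
    (s : Fin N → HahnSeries ℚ L) (hs : ∀ i, HasConst (s i) 0)
    (w : (j : Fin mg) → Fin (dg j) → Fin (Mg j) → HahnSeries ℚ L)
    (hw : ∀ j ℓ i, HasConst (w j ℓ i) (rg j ℓ))
    (hsplit : (fam n' p).map (Phi φ) =
      (∏ i, (X - C (s i))) * ∏ j, ∏ ℓ, ∏ i, (X - C (w j ℓ i)))
    (α δp : Polynomial A) (β : ℕ → Polynomial A) (nd : ℕ) (hnd : 1 ≤ nd)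
    (hcop : (α * δp).eval 0 ≠ 0)
    (hZd : ∀ i ≤ nd, α * p i =
      PowerSeries.coeff (R := Polynomial A) i
        ((PowerSeries.mk fun j =>
          if j = 0 then X * β 0 else if j < nd then β j else 0) ^ N) +
        (if i = nd then δp else 0)) :
    lim0 ((∏ j, ∏ ℓ, ∏ i, (HahnSeries.C (0 : L) - w j ℓ i)) ^ (2 * N - 2) *
        ∏ q ∈ Finset.univ.filter (fun q : Fin N × Fin N => q.1 < q.2),
          (s q.1 - s q.2) ^ 2) =
      (-1 : L) ^ (N * (N - 1) / 2) * (N : L) ^ N * φ (δp.eval 0) ^ (N - 1) *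
        (∏ j, φ ((g j).eval 0) ^ Mg j) ^ (N - 1) / φ (α.eval 0) ^ (N - 1) := by
  classical
  have hN0 : N ≠ 0 := by omega
  have hNL : (N : L) ≠ 0 := by exact_mod_cast hN0
  -- constants
  set α0 : L := φ (α.eval 0) with hα0
  set δ0 : L := φ (δp.eval 0) with hδ0
  set b0 : L := φ ((β 0).eval 0) with hb0
  set G : L := ∏ j, φ ((g j).eval 0) ^ Mg j with hG
  have hcop' : α0 ≠ 0 ∧ δ0 ≠ 0 := by
    have h1 : φ ((α * δp).eval 0) ≠ 0 := fun h => hcop (hφ (by simpa using h))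
    rw [Polynomial.eval_mul, map_mul] at h1
    exact mul_ne_zero_iff.1 h1
  obtain ⟨hα, hδ⟩ := hcop'
  have hgev : ∀ j, φ ((g j).eval 0) = ∏ ℓ, (0 - rg j ℓ) := by
    intro j
    have h1 := congrArg (Polynomial.eval (φ 0)) (hgfac j)
    rw [Polynomial.eval_map, Polynomial.eval₂_at_apply, Polynomial.eval_prod] at h1
    simpa using h1
  have hG0 : G ≠ 0 := by
    rw [hG]
    refine Finset.prod_ne_zero_iff.2 fun j _ => pow_ne_zero _ ?_
    rw [hgev]
    exact Finset.prod_ne_zero_iff.2 fun ℓ _ => by simpa using hrg j ℓ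
  have hbN : b0 ^ N = α0 * G := by
    have h1 := hZd 0 (Nat.zero_le _)
    rw [if_neg (by omega), add_zero, PowerSeries.coeff_zero_eq_constantCoeff_apply, map_pow,
      ← PowerSeries.coeff_zero_eq_constantCoeff_apply, PowerSeries.coeff_mk, if_pos rfl, hF0,
      mul_pow, mul_left_comm] at h1
    have h2 := (Polynomial.monic_X_pow (R := A) N).isRegular.left h1
    have h3 := congrArg (fun q => φ (Polynomial.eval 0 q)) h2
    simp only [Polynomial.eval_mul, Polynomial.eval_pow, Polynomial.eval_prod, map_mul, map_pow,
      map_prod] at h3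
    exact h3.symm
  have hb : b0 ≠ 0 := by
    intro h
    rw [h, zero_pow hN0] at hbN
    exact mul_ne_zero hα hG0 hbN.symm
  -- the algebraic identity
  set bc : ℕ → Polynomial A := fun j =>
    if j = 0 then X * β 0 else if j < nd then β j else 0 with hbc
  obtain ⟨B, hB⟩ : ∃ B : Polynomial (PowerSeries A), ∀ m k,
      PowerSeries.coeff m (B.coeff k) = (bc m).coeff k := by
    have hd : ∀ i, (bc i).natDegree ≤ ∑ j ∈ Finset.range (nd + 1), (bc j).natDegree := by
      intro i
      by_cases hi : i < nd + 1
      · exact Finset.single_le_sum (f := fun j => (bc j).natDegree) (fun _ _ => Nat.zero_le _)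
          (Finset.mem_range.2 hi)
      · have : bc i = 0 := by
          simp only [hbc]
          rw [if_neg (by omega), if_neg (by omega)]
        simp [this]
    exact ⟨fam _ bc, coeff_fam _ bc hd⟩
  have hSB : Sw A B = PowerSeries.mk bc := Sw_ext fun m k => by rw [hB, PowerSeries.coeff_mk]
  set a' : Polynomial (PowerSeries A) := α.map PowerSeries.C with ha'
  set d' : Polynomial (PowerSeries A) := δp.map PowerSeries.C with hd'
  obtain ⟨R, hR⟩ : C (PowerSeries.X ^ (nd + 1)) ∣
      a' * fam n' p - B ^ N - d' * C (PowerSeries.X ^ nd) := by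
    apply dvd_of_Sw
    intro m hm
    have hX : Sw A (C (PowerSeries.X ^ nd)) = PowerSeries.X ^ nd := by
      simp only [Sw, Polynomial.coe_eval₂RingHom, Polynomial.eval₂_C, map_pow,
        PowerSeries.map_X]
    have hdiv : Sw A (a' * fam n' p - B ^ N - d' * C (PowerSeries.X ^ nd)) =
        Sw A a' * Sw A (fam n' p) - Sw A B ^ N - Sw A d' * Sw A (C (PowerSeries.X ^ nd)) := by
      rw [RingHom.map_sub, RingHom.map_sub, RingHom.map_mul, RingHom.map_mul, RingHom.map_pow]
    rw [hdiv, hSB, Sw_const, Sw_const, Sw_fam n' p hdeg, hX,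
      map_sub, map_sub, PowerSeries.coeff_C_mul, PowerSeries.coeff_C_mul, PowerSeries.coeff_mk,
      PowerSeries.coeff_X_pow, hZd m hm]
    split_ifs <;> simp
  have hid : a' * fam n' p =
      B ^ N + d' * C (PowerSeries.X ^ nd) + C (PowerSeries.X ^ (nd + 1)) * R := by
    rw [← hR]; ring
  -- evaluation at roots
  set ev : HahnSeries ℚ L → Polynomial (PowerSeries A) → HahnSeries ℚ L :=
    fun x Q => (Q.map (Phi φ)).eval x with hev
  have hs' : ∀ i, Ld 0 0 (s i) := hs
  have ev0 : ∀ i Q, Ld 0 (φ (PowerSeries.constantCoeff (Q.coeff 0))) (ev (s i) Q) :=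
    fun i Q => Ld.eval φ Q (hs' i)
  have eva : ∀ i, Ld 0 α0 (ev (s i) a') := fun i => by
    have := ev0 i a'
    rwa [ha', Polynomial.coeff_map, PowerSeries.constantCoeff_C,
      Polynomial.coeff_zero_eq_eval_zero] at this
  have evd : ∀ i, Ld 0 δ0 (ev (s i) d') := fun i => by
    have := ev0 i d'
    rwa [hd', Polynomial.coeff_map, PowerSeries.constantCoeff_C,
      Polynomial.coeff_zero_eq_eval_zero] at this
  have hB1 : φ (PowerSeries.constantCoeff (B.coeff 1)) = b0 := by
    rw [← PowerSeries.coeff_zero_eq_constantCoeff_apply, hB]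
    simp [hbc, hb0, Polynomial.coeff_zero_eq_eval_zero]
  have evB' : ∀ i, Ld 0 b0 (ev (s i) (derivative B)) := fun i => by
    have := ev0 i (derivative B)
    rw [Polynomial.coeff_derivative] at this
    simpa [hB1] using this
  have evF : ∀ i, ev (s i) (fam n' p) = 0 := by
    intro i
    simp only [hev]
    rw [hsplit, Polynomial.eval_mul, Polynomial.eval_prod,
      Finset.prod_eq_zero (Finset.mem_univ i) (by simp), zero_mul]
  have tail : ∀ i Q, Ld (nd : ℚ) 0 (ev (s i) (C (PowerSeries.X ^ (nd + 1)) * Q)) := by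
    intro i Q
    have h1 := (Ld.T (L := L) (nd + 1)).mul (ev0 i Q)
    simp only [hev, Polynomial.map_mul, Polynomial.map_C, Polynomial.eval_mul, Polynomial.eval_C,
      Phi_X_pow]
    exact h1.lower (by push_cast; linarith)
  have mid : ∀ i Q, Ld (nd : ℚ) (φ (PowerSeries.constantCoeff (Q.coeff 0)))
      (ev (s i) (Q * C (PowerSeries.X ^ nd))) := by
    intro i Q
    have h1 := (ev0 i Q).mul (Ld.T (L := L) nd)
    simp only [hev, Polynomial.map_mul, Polynomial.map_C, Polynomial.eval_mul, Polynomial.eval_C,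
      Phi_X_pow]
    simpa using h1
  have evadd : ∀ x P Q, ev x (P + Q) = ev x P + ev x Q := fun x P Q => by simp [hev]
  have evmul : ∀ x P Q, ev x (P * Q) = ev x P * ev x Q := fun x P Q => by simp [hev]
  have evpow : ∀ x P (k : ℕ), ev x (P ^ k) = ev x P ^ k := fun x P k => by simp [hev]
  -- leading coefficients of `B(s_i)`
  have hroot : ∀ i, ∃ c : L, c ^ N = -δ0 ∧ Ld ((nd : ℚ) / N) c (ev (s i) B) := by
    intro i
    apply Ld.root hN0 _ (neg_ne_zero.2 hδ)
    have h1 := congrArg (ev (s i)) hid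
    rw [evmul, evF, mul_zero, evadd, evadd, evpow] at h1
    have h2 : ev (s i) B ^ N =
        -(ev (s i) (d' * C (PowerSeries.X ^ nd)) + ev (s i) (C (PowerSeries.X ^ (nd + 1)) * R)) := by
      linear_combination -h1
    rw [h2]
    have h3 := ((mid i d').add (tail i R)).neg
    rwa [hd', Polynomial.coeff_map, PowerSeries.constantCoeff_C,
      Polynomial.coeff_zero_eq_eval_zero, add_zero] at h3
  choose c hcN hcB using hroot
  have hc0 : ∀ i, c i ≠ 0 := by
    intro i h
    have := hcN i
    rw [h, zero_pow hN0] at this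
    exact hδ (by simpa using this.symm)
  set e : ℚ := (nd : ℚ) / N with he
  have hNe : (N : ℚ) * e = nd := by
    rw [he]; field_simp
  have hepos : 0 < e := by
    rw [he]
    have : (0 : ℚ) < nd := by exact_mod_cast hnd
    have : (0 : ℚ) < N := by exact_mod_cast (by omega : 0 < N)
    positivity
  have hN1 : ((N - 1 : ℕ) : ℚ) = N - 1 := by
    rw [Nat.cast_sub (by omega)]; simp
  -- derivative of `F` at the roots
  have hFd : ∀ i, Ld (((N - 1 : ℕ) : ℚ) * e) (N * c i ^ (N - 1) * b0 / α0)
      (ev (s i) (derivative (fam n' p))) := by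
    intro i
    refine Ld.div ?_ (eva i) hα
    have h1 := congrArg (fun Q => ev (s i) (derivative Q)) hid
    simp only [derivative_add, derivative_mul, derivative_pow, derivative_C, mul_zero, add_zero,
      zero_mul, zero_add] at h1
    rw [evadd, evmul, evF, mul_zero, zero_add, evmul, mul_comm, evadd, evadd, evmul _ _ (derivative B),
      evmul _ (C (N : PowerSeries A)), evpow] at h1
    rw [h1]
    have h2 : Ld 0 (N : L) (ev (s i) (C (N : PowerSeries A))) := by
      have := Ld.Cc (N : L)
      simpa [hev] using this
    have h3 := (h2.mul ((hcB i).pow (N - 1))).mul (evB' i)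
    rw [zero_add, add_zero] at h3
    have hlt : ((N - 1 : ℕ) : ℚ) * e < nd := by
      rw [hN1]; linarith
    have h4 := (h3.add ((mid i (derivative d')).lower hlt)).add ((tail i (derivative R)).lower hlt)
    rwa [add_zero, add_zero] at h4
  have hW : ∀ x, Ld 0 0 x → Ld 0 G (∏ j, ∏ ℓ, ∏ i, (x - w j ℓ i)) := by
    intro x hx
    have : G = ∏ j, ∏ ℓ, ∏ _i : Fin (Mg j), (0 - rg j ℓ) := by
      rw [hG]
      refine Finset.prod_congr rfl fun j _ => ?_
      rw [hgev, ← Finset.prod_pow]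
      refine Finset.prod_congr rfl fun ℓ _ => ?_
      simp
    rw [this]
    exact Ld.prod0 _ fun j _ => Ld.prod0 _ fun ℓ _ => Ld.prod0 _ fun i _ => hx.sub (hw j ℓ i)
  have hP : ∀ i, Ld (((N - 1 : ℕ) : ℚ) * e) (N * c i ^ (N - 1) * b0 / α0 / G)
      (∏ j ∈ Finset.univ.erase i, (s i - s j)) := by
    intro i
    refine Ld.div ?_ (hW (s i) (hs' i)) hG0
    have h1 := hFd i
    have h2 : ev (s i) (derivative (fam n' p)) =
        (∏ j ∈ Finset.univ.erase i, (s i - s j)) * ∏ j, ∏ ℓ, ∏ k, (s i - w j ℓ k) := by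
      simp only [hev]
      rw [← Polynomial.derivative_map, hsplit, ← Finset.mul_prod_erase _ _ (Finset.mem_univ i),
        mul_assoc, Polynomial.derivative_mul]
      simp [Polynomial.eval_prod]
    rwa [h2] at h1
  have hP0 : ∀ i, (N : L) * c i ^ (N - 1) * b0 / α0 / G ≠ 0 := fun i =>
    div_ne_zero (div_ne_zero (mul_ne_zero (mul_ne_zero hNL (pow_ne_zero _ (hc0 i))) hb) hα) hG0
  have hdiff : ∀ i j, Ld e ((c i - c j) / b0) (s i - s j) := by
    intro i j
    obtain ⟨u, hu, eu⟩ := Ld.diffq φ B (hs' i) (hs' j)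
    rw [hB1] at hu
    refine Ld.div ?_ hu hb
    rw [← eu]
    exact (hcB i).sub (hcB j)
  have hcinj : Function.Injective c := by
    intro i j hij
    by_contra hne
    have h1 := Ld.prod (Finset.univ.erase i) fun j _ => hdiff i j
    rw [Finset.card_erase_of_mem (Finset.mem_univ i), Finset.card_univ, Fintype.card_fin] at h1
    have h2 := h1.1.symm.trans (hP i).1
    apply hP0 i
    rw [← h2]
    exact Finset.prod_eq_zero (Finset.mem_erase.2 ⟨Ne.symm hne, Finset.mem_univ j⟩) (by simp [hij])
  have hprodc := prod_roots hN c hcinj δ0 hcN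
  rw [pairs_prod]
  have hz : Ld 0 (0 : L) (HahnSeries.C (0 : L)) := Ld.Cc 0
  have hsg : Ld 0 ((-1 : L) ^ (N * (N - 1) / 2))
      ((-1 : HahnSeries ℚ L) ^ (N * (N - 1) / 2)) := (Ld.one.neg).pow0 _
  have hfin := ((hW _ hz).pow0 (2 * N - 2)).mul (hsg.mul (Ld.prod Finset.univ fun i _ => hP i))
  have hval : G ^ (2 * N - 2) * ((-1 : L) ^ (N * (N - 1) / 2) *
      ∏ i : Fin N, (N * c i ^ (N - 1) * b0 / α0 / G)) =
      (-1 : L) ^ (N * (N - 1) / 2) * (N : L) ^ N * δ0 ^ (N - 1) * G ^ (N - 1) / α0 ^ (N - 1) := by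
    rw [Finset.prod_div_distrib, Finset.prod_div_distrib, Finset.prod_mul_distrib,
      Finset.prod_mul_distrib, Finset.prod_pow, hprodc]
    simp only [Finset.prod_const, Finset.card_univ, Fintype.card_fin]
    rw [hbN]
    obtain ⟨k, rfl⟩ : ∃ k, N = k + 1 := ⟨N - 1, by omega⟩
    rw [show 2 * (k + 1) - 2 = k + k by omega, Nat.add_sub_cancel]
    generalize (-1 : L) ^ ((k + 1) * k / 2) = ε
    field_simp
    try ring
  rw [← hval]
  refine hfin.lim ?_
  exact mul_ne_zero (pow_ne_zero _ hG0) (mul_ne_zero (pow_ne_zero _ (by simp))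
    (Finset.prod_ne_zero_iff.2 fun i _ => hP0 i))
end
end

section
/- Suppose the family F(x,t), with F_0 = ∏_ν f_ν^{n_ν} and each f_ν = ∏_{ℓ=1}^{d_ν} (x − a_{νℓ}) with all a_{νℓ} pairwise distinct, satisfies (α_ν, δ_{ν,n(ν)})-Zd for each f_ν with n_ν > 1, and suppose Δ_{A[[t]]}(F) ≠ 0. Then there exists a nonzero constant c ∈ k such that Δ_{A[[t]]}(F)_0 = ∏_ν Δ(f_ν)^{n_ν} · c · ∏_ν res(f_ν, δ_{ν,n(ν)}^{n_ν−1}) · ∏_ν ∏_{ν'≠ν} res(f_ν, f_{ν'})^{n_{ν'}} / ∏_ν res(f_ν, α_ν^{n_ν−1}). -/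
open Finset Polynomial

noncomputable section

namespace Stmt9

/-- `x = c t^q + higher order terms` (with `c` possibly zero). -/
def Lead {L : Type*} [Field L] (x : HahnSeries ℚ L) (q : ℚ) (c : L) : Prop :=
  x.coeff q = c ∧ ∀ r < q, x.coeff r = 0

section lead
variable {L : Type*} [Field L] {x y : HahnSeries ℚ L} {q r : ℚ} {c e : L}

lemma Lead.mul (hx : Lead x q c) (hy : Lead y r e) : Lead (x * y) (q + r) (c * e) := by
  refine ⟨?_, ?_⟩
  · rw [HahnSeries.coeff_mul, ← hx.1, ← hy.1]
    by_cases h : x.coeff q * y.coeff r = 0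
    · rw [h]
      refine Finset.sum_eq_zero fun ij hij => ?_
      have h3 : ij.1 + ij.2 = q + r := by simp at hij; exact hij.2.2
      rcases lt_trichotomy ij.1 q with h1 | h1 | h1
      · rw [hx.2 _ h1, zero_mul]
      · have : ij.2 = r := by linarith
        rw [h1, this, h]
      · rw [hy.2 _ (by linarith), mul_zero]
    · rw [Finset.sum_eq_single (q, r)]
      · intro ij hij hne
        have h3 : ij.1 + ij.2 = q + r := by simp at hij; exact hij.2.2
        rcases lt_trichotomy ij.1 q with h1 | h1 | h1
        · rw [hx.2 _ h1, zero_mul]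
        · have : ij.2 = r := by linarith
          exact absurd (Prod.ext h1 this) hne
        · rw [hy.2 _ (by linarith), mul_zero]
      · intro hn
        exfalso; apply hn
        simp only [mul_eq_zero, not_or] at h
        simp [h.1, h.2]
  · intro a ha
    rw [HahnSeries.coeff_mul]
    refine Finset.sum_eq_zero fun ij hij => ?_
    have h3 : ij.1 + ij.2 = a := by simp at hij; exact hij.2.2
    rcases lt_or_ge ij.1 q with h1 | h1
    · rw [hx.2 _ h1, zero_mul]
    · rw [hy.2 _ (by linarith), mul_zero]

lemma Lead.add (hx : Lead x q c) (hy : Lead y q e) : Lead (x + y) q (c + e) :=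
  ⟨by rw [HahnSeries.coeff_add, hx.1, hy.1], fun r hr => by
    rw [HahnSeries.coeff_add, hx.2 r hr, hy.2 r hr, add_zero]⟩

lemma Lead.neg (hx : Lead x q c) : Lead (-x) q (-c) :=
  ⟨by rw [HahnSeries.coeff_neg, hx.1], fun r hr => by
    rw [HahnSeries.coeff_neg, hx.2 r hr, neg_zero]⟩

lemma Lead.mono (hx : Lead x q c) (h : r < q) : Lead x r 0 :=
  ⟨hx.2 r h, fun r' hr' => hx.2 r' (hr'.trans h)⟩

lemma Lead.single (q : ℚ) (c : L) : Lead (HahnSeries.single q c) q c :=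
  ⟨by simp, fun r hr => HahnSeries.coeff_single_of_ne hr.ne⟩

lemma Lead.one : Lead (1 : HahnSeries ℚ L) 0 1 := Lead.single 0 1

lemma Lead.pow (hx : Lead x q c) (n : ℕ) : Lead (x ^ n) (n * q) (c ^ n) := by
  induction n with
  | zero => simpa using Lead.one
  | succ n ih =>
    have := ih.mul hx
    rw [pow_succ, pow_succ]
    convert this using 1
    push_cast; ring

lemma Lead.natCast (n : ℕ) : Lead (n : HahnSeries ℚ L) 0 (n : L) := by
  have : (n : HahnSeries ℚ L) = HahnSeries.C (n : L) := by simp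
  rw [this]; exact Lead.single 0 _

lemma Lead.unique (hx : Lead x q c) (hy : Lead x r e) (hc : c ≠ 0) (he : e ≠ 0) :
    q = r ∧ c = e := by
  have : q = r := by
    rcases lt_trichotomy q r with h | h | h
    · exact absurd (hx.1.symm.trans (hy.2 _ h)) hc
    · exact h
    · exact absurd (hy.1.symm.trans (hx.2 _ h)) he
  subst this
  exact ⟨rfl, hx.1.symm.trans hy.1⟩

lemma lead_order (x : HahnSeries ℚ L) : Lead x x.order (lim0 x) :=
  ⟨rfl, fun _ hr => HahnSeries.coeff_eq_zero_of_lt_order hr⟩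

lemma lim0_ne (hx : x ≠ 0) : lim0 x ≠ 0 := fun h => hx (HahnSeries.coeff_order_eq_zero.1 h)

lemma Lead.ne_zero (hx : Lead x q c) (hc : c ≠ 0) : x ≠ 0 := by
  rintro rfl
  exact hc (by rw [← hx.1]; simp)

lemma Lead.lim0_eq (hx : Lead x q c) (hc : c ≠ 0) : lim0 x = c :=
  ((lead_order x).unique hx (lim0_ne (hx.ne_zero hc)) hc).2

lemma lim0_one : lim0 (1 : HahnSeries ℚ L) = 1 := Lead.one.lim0_eq one_ne_zero

lemma lim0_mul (x y : HahnSeries ℚ L) : lim0 (x * y) = lim0 x * lim0 y := by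
  by_cases hx : x = 0
  · subst hx; simp [lim0]
  by_cases hy : y = 0
  · subst hy; simp [lim0]
  exact ((lead_order x).mul (lead_order y)).lim0_eq (mul_ne_zero (lim0_ne hx) (lim0_ne hy))

lemma lim0_prod {ι : Type*} (s : Finset ι) (f : ι → HahnSeries ℚ L) :
    lim0 (∏ i ∈ s, f i) = ∏ i ∈ s, lim0 (f i) := by
  classical
  induction s using Finset.induction_on with
  | empty => simp [lim0_one]
  | insert i s hi ih => rw [Finset.prod_insert hi, Finset.prod_insert hi, lim0_mul, ih]

lemma lim0_neg_one_pow (e : ℕ) : lim0 ((-1 : HahnSeries ℚ L) ^ e) = (-1) ^ e :=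
  ((Lead.one.neg).pow e).lim0_eq (by simp)

end lead

section ev
variable {A L : Type*} [CommRing A] [Field L]

lemma lead_Phi (φ : A →+* L) (f : PowerSeries A) :
    Lead (Phi φ f) 0 (φ (PowerSeries.constantCoeff f)) := by
  have h0 : ∀ g : PowerSeries L, Lead (HahnSeries.ofPowerSeries ℚ L g) 0
      (PowerSeries.constantCoeff g) := by
    intro g
    refine ⟨?_, ?_⟩
    · have := HahnSeries.ofPowerSeries_apply_coeff (Γ := ℚ) g 0
      simpa using this
    · intro r hr
      rw [HahnSeries.ofPowerSeries_apply]
      apply HahnSeries.embDomain_of_notMem_range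
      rintro ⟨n, hn⟩
      simp at hn
      have : (0 : ℚ) ≤ n := by positivity
      linarith
  have := h0 (PowerSeries.map φ f)
  rw [← PowerSeries.coeff_zero_eq_constantCoeff_apply, PowerSeries.coeff_map,
    PowerSeries.coeff_zero_eq_constantCoeff_apply] at this
  exact this

lemma lead_eval (φ : A →+* L) {s : HahnSeries ℚ L} {a : L} (hs : HasConst s a)
    (b : Polynomial (PowerSeries A)) :
    Lead (b.eval₂ (Phi φ) s) 0
      ((b.map (PowerSeries.constantCoeff (R := A))).eval₂ φ a) := by
  have hs' : Lead s 0 a := hs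
  induction b using Polynomial.induction_on' with
  | add p q hp hq => simpa using hp.add hq
  | monomial n f =>
    have := (lead_Phi φ f).mul (hs'.pow n)
    simpa [Polynomial.eval₂_monomial] using this

lemma Phi_X_pow (φ : A →+* L) (n : ℕ) :
    Phi φ (PowerSeries.X ^ n) = HahnSeries.single (n : ℚ) 1 := by
  simp only [Phi, RingHom.comp_apply, map_pow, PowerSeries.map_X]
  rw [← map_pow, HahnSeries.ofPowerSeries_X_pow]

/-- `A[x][T] → A[[t]][x]`, `T ↦ t`. -/
def Theta : Polynomial (Polynomial A) →+* Polynomial (PowerSeries A) :=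
  Polynomial.eval₂RingHom (Polynomial.mapRingHom (PowerSeries.C (R := A)))
    (Polynomial.C PowerSeries.X)

lemma coeff_Theta (P : Polynomial (Polynomial A)) (i j : ℕ) :
    PowerSeries.coeff i ((Theta P).coeff j) = (P.coeff i).coeff j := by
  induction P using Polynomial.induction_on' with
  | add p q hp hq => simp [hp, hq]
  | monomial n f =>
    simp only [Theta, Polynomial.coe_eval₂RingHom, Polynomial.eval₂_monomial,
      Polynomial.coe_mapRingHom]
    rw [← map_pow, Polynomial.coeff_mul_C, Polynomial.coeff_map, PowerSeries.coeff_C_mul,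
      PowerSeries.coeff_X_pow, Polynomial.coeff_monomial]
    by_cases h : i = n
    · subst h; simp
    · simp [h, Ne.symm h]

lemma C_X_pow_dvd (n : ℕ) (b : Polynomial (PowerSeries A))
    (h : ∀ i < n, ∀ j, PowerSeries.coeff i (b.coeff j) = 0) :
    ∃ R : Polynomial (PowerSeries A), b = Polynomial.C (PowerSeries.X ^ n) * R := by
  have : Polynomial.C (PowerSeries.X ^ n) ∣ b := by
    rw [Polynomial.C_dvd_iff_dvd_coeff]
    intro j
    rw [PowerSeries.X_pow_dvd_iff]
    intro i hi; exact h i hi j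
  exact this

lemma coeff_fam (n' : ℕ) (p : ℕ → Polynomial A) (hdeg : ∀ i, (p i).natDegree ≤ n') (i j : ℕ) :
    PowerSeries.coeff i ((fam n' p).coeff j) = (p i).coeff j := by
  simp only [fam, Polynomial.finsetSum_coeff, Polynomial.coeff_C_mul_X_pow]
  rw [Finset.sum_ite_eq]
  split_ifs with h
  · simp
  · rw [Polynomial.coeff_eq_zero_of_natDegree_lt]
    · simp
    · simp at h; exact (hdeg i).trans_lt h

lemma coeff_mapC_mul (α : Polynomial A) (b : Polynomial (PowerSeries A)) (q : Polynomial A) (i : ℕ)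
    (h : ∀ j, PowerSeries.coeff i (b.coeff j) = q.coeff j) (j : ℕ) :
    PowerSeries.coeff i ((α.map PowerSeries.C * b).coeff j) = (α * q).coeff j := by
  simp [Polynomial.coeff_mul, h]

/-- Constant term in `t` of the family. -/
lemma fam_map_const (n' : ℕ) (p : ℕ → Polynomial A) (hdeg : ∀ i, (p i).natDegree ≤ n') :
    (fam n' p).map (PowerSeries.constantCoeff (R := A)) = p 0 := by
  ext j
  rw [Polynomial.coeff_map, ← PowerSeries.coeff_zero_eq_constantCoeff_apply, coeff_fam n' p hdeg]

lemma zd_expand (n' : ℕ) (p : ℕ → Polynomial A) (hdeg : ∀ i, (p i).natDegree ≤ n')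
    (f α δ : Polynomial A) (β : ℕ → Polynomial A) (n N : ℕ)
    (h : ∀ i ≤ n, α * p i =
        PowerSeries.coeff (R := Polynomial A) i
          ((PowerSeries.mk fun j =>
            if j = 0 then f * β 0 else if j < n then β j else 0) ^ N) +
          (if i = n then δ else 0)) (hn : 1 ≤ n) :
    ∃ G R : Polynomial (PowerSeries A),
      G.map (PowerSeries.constantCoeff (R := A)) = f * β 0 ∧
      α.map PowerSeries.C * fam n' p =
        G ^ N + Polynomial.C (PowerSeries.X ^ n) * (δ.map PowerSeries.C
          + Polynomial.C PowerSeries.X * R) := by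
  set c : ℕ → Polynomial A := fun j => if j = 0 then f * β 0 else if j < n then β j else 0 with hc
  set g : Polynomial (Polynomial A) := ∑ j ∈ Finset.range n, Polynomial.monomial j (c j) with hg
  have hgc : ∀ j, g.coeff j = c j := by
    intro j
    simp only [hg, Polynomial.finsetSum_coeff, Polynomial.coeff_monomial]
    rw [Finset.sum_ite_eq']
    split_ifs with h1
    · rfl
    · simp at h1
      have : j ≠ 0 := by omega
      simp [hc, this, h1.not_gt]
  have hcoe : (PowerSeries.mk c : PowerSeries (Polynomial A)) = (g : PowerSeries (Polynomial A)) := by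
    ext1 j; simp [hgc]
  obtain ⟨R, hR⟩ := C_X_pow_dvd (n + 1) (α.map PowerSeries.C * fam n' p - Theta g ^ N
      - Polynomial.C (PowerSeries.X ^ n) * δ.map PowerSeries.C) (by
    intro i hi j
    rw [Polynomial.coeff_sub, Polynomial.coeff_sub, map_sub, map_sub,
      coeff_mapC_mul α _ (p i) i (fun j => coeff_fam n' p hdeg i j), ← map_pow, coeff_Theta,
      h i (by omega), hcoe, ← Polynomial.coe_pow, Polynomial.coeff_coe, Polynomial.coeff_add,
      Polynomial.coeff_C_mul, Polynomial.coeff_map, mul_comm, PowerSeries.coeff_C_mul,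
      PowerSeries.coeff_X_pow]
    split_ifs <;> simp)
  refine ⟨Theta g, R, ?_, ?_⟩
  · ext1 j
    rw [Polynomial.coeff_map, ← PowerSeries.coeff_zero_eq_constantCoeff_apply, coeff_Theta, hgc]
    simp [hc]
  · have h2 : (Polynomial.C (PowerSeries.X ^ (n + 1)) : Polynomial (PowerSeries A))
        = Polynomial.C (PowerSeries.X ^ n) * Polynomial.C PowerSeries.X := by
      rw [← map_mul, pow_succ]
    rw [h2] at hR
    linear_combination hR

end ev
section loc
set_option linter.unusedSectionVars false
variable {A L : Type*} [CommRing A] [Field L] [CharZero L]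

lemma local_one (φ : A →+* L) (F : Polynomial (PowerSeries A)) {s : HahnSeries ℚ L} {a : L}
    (hs : HasConst s a) (f M : Polynomial A)
    (hF : F.map (PowerSeries.constantCoeff (R := A)) = f * M)
    (hfa : f.eval₂ φ a = 0) (hf' : f.derivative.eval₂ φ a ≠ 0) (hM : M.eval₂ φ a ≠ 0) :
    lim0 (F.derivative.eval₂ (Phi φ) s) = f.derivative.eval₂ φ a * M.eval₂ φ a := by
  have h := lead_eval φ hs F.derivative
  rw [← Polynomial.derivative_map, hF, Polynomial.derivative_mul, Polynomial.eval₂_add,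
    Polynomial.eval₂_mul, Polynomial.eval₂_mul, hfa, zero_mul, add_zero] at h
  exact h.lim0_eq (mul_ne_zero hf' hM)

lemma map_C_const (α : Polynomial A) :
    (α.map (PowerSeries.C (R := A))).map (PowerSeries.constantCoeff (R := A)) = α := by
  rw [Polynomial.map_map]
  convert Polynomial.map_id
  ext x; simp

lemma local_gt (φ : A →+* L) (F G R : Polynomial (PowerSeries A)) {s : HahnSeries ℚ L} {a : L}
    (hs : HasConst s a) (hF : F.eval₂ (Phi φ) s = 0)
    (f α δ b : Polynomial A) (n N : ℕ) (hn : 1 ≤ n) (hN : 1 < N)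
    (hG : G.map (PowerSeries.constantCoeff (R := A)) = f * b)
    (h : α.map PowerSeries.C * F =
        G ^ N + Polynomial.C (PowerSeries.X ^ n) * (δ.map PowerSeries.C
          + Polynomial.C PowerSeries.X * R))
    (hfa : f.eval₂ φ a = 0) (hf' : f.derivative.eval₂ φ a ≠ 0) (hb : b.eval₂ φ a ≠ 0)
    (hδ : δ.eval₂ φ a ≠ 0) (hα : α.eval₂ φ a ≠ 0) :
    ∃ u : L, u ^ N = - δ.eval₂ φ a ∧
      α.eval₂ φ a * lim0 (F.derivative.eval₂ (Phi φ) s) =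
        N * u ^ (N - 1) * (f.derivative.eval₂ φ a * b.eval₂ φ a) := by
  set Q : Polynomial (PowerSeries A) := δ.map PowerSeries.C + Polynomial.C PowerSeries.X * R with hQ
  set u := G.eval₂ (Phi φ) s with hu
  have hQ0 : Lead (Q.eval₂ (Phi φ) s) 0 (δ.eval₂ φ a) := by
    have := lead_eval φ hs Q
    rw [hQ, Polynomial.map_add, map_C_const, Polynomial.map_mul, Polynomial.map_C] at this
    rw [hQ]
    simpa using this
  have e1 := congrArg (Polynomial.eval₂ (Phi φ) s) h
  simp only [Polynomial.eval₂_mul, Polynomial.eval₂_add, Polynomial.eval₂_pow, hF, mul_zero,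
    Polynomial.eval₂_C, Phi_X_pow, ← hu] at e1
  have hL := ((Lead.single (n : ℚ) (1 : L)).mul hQ0).neg
  have e2 : -(HahnSeries.single (n : ℚ) (1 : L) * Q.eval₂ (Phi φ) s) = u ^ N := by
    linear_combination e1
  rw [e2, add_zero, one_mul] at hL
  have hδn : - δ.eval₂ φ a ≠ 0 := neg_ne_zero.2 hδ
  have hu0 : u ≠ 0 := by
    intro h0
    apply hL.ne_zero hδn
    rw [h0, zero_pow (by omega)]
  have hul := lead_order u
  have hlu := lim0_ne hu0
  obtain ⟨ho, hc⟩ := (hul.pow N).unique hL (pow_ne_zero _ hlu) hδn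
  refine ⟨lim0 u, hc, ?_⟩
  have hNpos : (0 : ℚ) < N := by exact_mod_cast (by omega : 0 < N)
  have hnpos : (0 : ℚ) < n := by exact_mod_cast (by omega : 0 < n)
  have hopos : 0 < u.order := by
    by_contra hcon
    push Not at hcon
    nlinarith
  -- the derivative
  have e3 := congrArg (fun P => Polynomial.eval₂ (Phi φ) s (Polynomial.derivative P)) h
  simp only [Polynomial.derivative_mul, Polynomial.derivative_add, Polynomial.derivative_pow,
    Polynomial.eval₂_mul, Polynomial.eval₂_add, Polynomial.eval₂_pow, hF, mul_zero,
    Polynomial.eval₂_C, Phi_X_pow, ← hu, Polynomial.derivative_C, zero_mul,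
    zero_add, map_natCast] at e3
  rw [← Polynomial.C_eq_natCast, Polynomial.eval₂_C, map_natCast] at e3
  have hG' := lead_eval φ hs G.derivative
  rw [← Polynomial.derivative_map, hG, Polynomial.derivative_mul, Polynomial.eval₂_add,
    Polynomial.eval₂_mul, Polynomial.eval₂_mul, hfa, zero_mul, add_zero] at hG'
  have hmain := ((Lead.natCast (L := L) N).mul (hul.pow (N - 1))).mul hG'
  have hQ' := (Lead.single (n : ℚ) (1 : L)).mul (lead_eval φ hs Q.derivative)
  have hlt : (0 : ℚ) + (N - 1 : ℕ) * u.order + 0 < n + 0 := by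
    rw [Nat.cast_sub (by omega)]
    push_cast
    linarith
  have hsum := hmain.add (hQ'.mono hlt)
  have hNL : (N : L) ≠ 0 := by exact_mod_cast (by omega : N ≠ 0)
  have hα0 := lead_eval φ hs (α.map PowerSeries.C)
  rw [map_C_const] at hα0
  rw [← hα0.lim0_eq hα, ← lim0_mul, e3]
  rw [hsum.lim0_eq, add_zero]
  rw [add_zero]
  exact mul_ne_zero (mul_ne_zero hNL (pow_ne_zero _ hlu)) (mul_ne_zero hf' hb)

lemma root_unity {k : Type*} [Field k] [IsAlgClosed k] (κ : k →+* L) (n : ℕ) (hn : 0 < n)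
    (z : L) (hz : z ^ n = 1) : ∃ c : k, κ c = z := by
  have hsp : (X ^ n - 1 : Polynomial k).Splits := IsAlgClosed.splits _
  have h1 := hsp.roots_map κ
  have : z ∈ ((X ^ n - 1 : Polynomial k).map κ).roots := by
    rw [Polynomial.mem_roots']
    constructor
    · simp only [Polynomial.map_sub, Polynomial.map_pow, Polynomial.map_X, Polynomial.map_one]
      exact Polynomial.X_pow_sub_C_ne_zero hn 1
    · simp [hz]
  rw [h1, Multiset.mem_map] at this
  obtain ⟨c, -, hc⟩ := this
  exact ⟨c, hc⟩

lemma local_all [IsDomain A] {k : Type*} [Field k] [IsAlgClosed k] (κ : k →+* L)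
    (φ : A →+* L) (n' : ℕ) (p : ℕ → Polynomial A) (hdeg : ∀ i, (p i).natDegree ≤ n')
    (f M α δ : Polynomial A) (β : ℕ → Polynomial A) (n N : ℕ) (hN : 0 < N) (hfm : f.Monic)
    (hp0 : p 0 = f ^ N * M) {s : Fin N → HahnSeries ℚ L} {a : L}
    (hs : ∀ i, HasConst (s i) a) (hF : ∀ i, (fam n' p).eval₂ (Phi φ) (s i) = 0)
    (hfa : f.eval₂ φ a = 0) (hf' : f.derivative.eval₂ φ a ≠ 0) (hM : M.eval₂ φ a ≠ 0)
    (hZ : 1 < N → 1 ≤ n ∧ (α * δ).eval₂ φ a ≠ 0 ∧ ∀ i ≤ n, α * p i =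
        PowerSeries.coeff (R := Polynomial A) i
          ((PowerSeries.mk fun j =>
            if j = 0 then f * β 0 else if j < n then β j else 0) ^ N) +
          (if i = n then δ else 0)) :
    ∃ c : k, c ≠ 0 ∧ ∏ i, lim0 ((fam n' p).derivative.eval₂ (Phi φ) (s i)) =
      κ c * (δ.eval₂ φ a ^ (N - 1) / α.eval₂ φ a ^ (N - 1)) * f.derivative.eval₂ φ a ^ N
        * M.eval₂ φ a := by
  have hconst := fam_map_const n' p hdeg
  rcases (show N = 1 ∨ 1 < N by omega) with rfl | hN1
  · refine ⟨1, one_ne_zero, ?_⟩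
    rw [pow_one] at hp0
    rw [hp0] at hconst
    simp [local_one φ _ (hs 0) f M hconst hfa hf' hM]
  obtain ⟨hn, hαδ, hexp⟩ := hZ hN1
  rw [Polynomial.eval₂_mul] at hαδ
  have hα := left_ne_zero_of_mul hαδ
  have hδ := right_ne_zero_of_mul hαδ
  have hβM : β 0 ^ N = α * M := by
    have h0 := hexp 0 (by omega)
    rw [if_neg (by omega : ¬ (0 = n)), PowerSeries.coeff_zero_eq_constantCoeff_apply, map_pow,
      ← PowerSeries.coeff_zero_eq_constantCoeff_apply, PowerSeries.coeff_mk, if_pos rfl, add_zero,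
      hp0, mul_pow] at h0
    apply mul_left_cancel₀ (pow_ne_zero N hfm.ne_zero)
    linear_combination -h0
  have hβ := congrArg (Polynomial.eval₂ φ a) hβM
  rw [Polynomial.eval₂_pow, Polynomial.eval₂_mul] at hβ
  have hb : (β 0).eval₂ φ a ≠ 0 := by
    intro h0
    rw [h0, zero_pow (by omega)] at hβ
    exact mul_ne_zero hα hM hβ.symm
  obtain ⟨G, R, hG, hGR⟩ := zd_expand n' p hdeg f α δ β n N hexp hn
  have hloc := fun i => local_gt φ (fam n' p) G R (hs i) (hF i) f α δ (β 0) n N hn hN1 hG hGR hfa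
    hf' hb hδ hα
  choose u hu hu' using hloc
  set U := ∏ i, u i with hU
  set Δ := δ.eval₂ φ a
  set α' := α.eval₂ φ a
  have hUN : U ^ N = (-Δ) ^ N := by
    rw [hU, ← Finset.prod_pow]
    simp [hu]
  have hz : (U / Δ) ^ (2 * N) = 1 := by
    rw [mul_comm, pow_mul, div_pow, hUN, neg_pow, mul_div_assoc, div_self (pow_ne_zero _ hδ),
      mul_one, ← pow_mul, mul_comm, pow_mul]
    simp
  obtain ⟨c, hc⟩ := root_unity κ (2 * N) (by omega) _ hz
  have hNL : (N : L) ≠ 0 := by exact_mod_cast (by omega : N ≠ 0)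
  have hNk : (N : k) ≠ 0 := by
    intro h0
    apply hNL
    have := congrArg κ h0
    simpa using this
  have hc0 : c ≠ 0 := by
    rintro rfl
    rw [map_zero] at hc
    rw [← hc, zero_pow (by omega)] at hz
    exact zero_ne_one hz
  refine ⟨N ^ N * c ^ (N - 1), mul_ne_zero (pow_ne_zero _ hNk) (pow_ne_zero _ hc0), ?_⟩
  have h1 : α' ^ N * ∏ i, lim0 ((fam n' p).derivative.eval₂ (Phi φ) (s i)) =
      N ^ N * U ^ (N - 1) * (f.derivative.eval₂ φ a ^ N * (β 0).eval₂ φ a ^ N) := by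
    have : α' ^ N = ∏ i : Fin N, α' := by simp
    rw [this, ← Finset.prod_mul_distrib, Finset.prod_congr rfl (fun i _ => hu' i),
      Finset.prod_mul_distrib, Finset.prod_mul_distrib, Finset.prod_pow]
    rw [← hU]
    simp [mul_pow]
  have hUc : U = κ c * Δ := by rw [hc, div_mul_cancel₀ _ hδ]
  rw [hβ, hUc] at h1
  simp only [map_mul, map_pow, map_natCast]
  obtain ⟨N, rfl⟩ : ∃ N', N = N' + 1 := ⟨N - 1, by omega⟩
  simp only [Nat.add_sub_cancel] at h1 ⊢
  apply mul_left_cancel₀ (pow_ne_zero (N + 1) hα)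
  rw [h1]
  field_simp
  ring

end loc
section glob

lemma prod_offDiag_erase {ι M : Type*} [Fintype ι] [DecidableEq ι] [CommMonoid M]
    (g : ι → ι → M) :
    ∏ q ∈ (Finset.univ : Finset ι).offDiag, g q.1 q.2 = ∏ q, ∏ q' ∈ Finset.univ.erase q, g q q' := by
  have h : (Finset.univ : Finset ι).offDiag = Finset.univ.filter (fun q : ι × ι => q.1 ≠ q.2) := by
    ext q; simp [Finset.mem_offDiag]
  rw [h, Finset.prod_filter, Fintype.prod_prod_type]
  refine Finset.prod_congr rfl fun q _ => ?_
  have h2 : (Finset.univ : Finset ι).erase q = Finset.univ.filter (fun q' => q ≠ q') := by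
    ext x; simp [eq_comm]
  rw [h2, Finset.prod_filter]

lemma deriv_prod_eval {ι R : Type*} [Fintype ι] [DecidableEq ι] [CommRing R] (S : ι → R) (q : ι) :
    (Polynomial.derivative (∏ q, (X - C (S q)))).eval (S q)
      = ∏ q' ∈ Finset.univ.erase q, (S q - S q') := by
  rw [← Finset.mul_prod_erase Finset.univ _ (Finset.mem_univ q), Polynomial.derivative_mul]
  simp [Polynomial.eval_prod]

lemma disc_sign {L : Type*} [Field L] {d : ℕ} (a : Fin d → L) :
    ∏ q, ∏ q' ∈ Finset.univ.erase q, (a q - a q') =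
      (-1) ^ (Finset.univ.filter (fun q : Fin d × Fin d => q.1 < q.2)).card * discOf a := by
  rw [← prod_offDiag_erase (fun q q' => a q - a q')]
  have h : (Finset.univ : Finset (Fin d)).offDiag =
      (Finset.univ.filter (fun q : Fin d × Fin d => q.1 < q.2)) ∪
      (Finset.univ.filter (fun q : Fin d × Fin d => q.2 < q.1)) := by
    ext q; simp [Finset.mem_offDiag]
  rw [h, Finset.prod_union]
  · have h2 : ∏ q ∈ Finset.univ.filter (fun q : Fin d × Fin d => q.2 < q.1), (a q.1 - a q.2) =
        ∏ q ∈ Finset.univ.filter (fun q : Fin d × Fin d => q.1 < q.2), (a q.2 - a q.1) := by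
      refine Finset.prod_nbij' Prod.swap Prod.swap ?_ ?_ ?_ ?_ ?_ <;> simp
    rw [h2, ← Finset.prod_mul_distrib, ← Finset.prod_const, discOf, ← Finset.prod_mul_distrib]
    refine Finset.prod_congr rfl fun q _ => ?_
    ring
  · rw [Finset.disjoint_left]
    intro q h1 h2
    simp at h1 h2
    exact absurd h1 h2.not_gt

end glob

end Stmt9

open Stmt9

/-- **Corollary 3.8.**  Suppose `F(x,t)` satisfies `(α_ν, δ_{ν,n(ν)})`-Zd for each
`f_ν = ∏_ℓ (x − a_{νℓ})` with `n_ν > 1`, the `a_{νℓ}` pairwise distinct, and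
`Δ_{A[[t]]}(F) ≠ 0`.  Then there is a nonzero constant `c ∈ k` with
`Δ_{A[[t]]}(F)_0 = ∏_ν Δ(f_ν)^{n_ν} · c · ∏_ν res(f_ν, δ_ν^{n_ν−1}) ·
  ∏_ν ∏_{ν'≠ν} res(f_ν, f_{ν'})^{n_{ν'}} / ∏_ν res(f_ν, α_ν^{n_ν−1})`. -/
theorem stmt9 {k A L : Type*} [Field k] [IsAlgClosed k] [CharZero k]
    [CommRing A] [IsDomain A] [Algebra k A]
    [Field L] [IsAlgClosed L] [CharZero L]
    (φ : A →+* L) (hφ : Function.Injective φ)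
    (n' : ℕ) (p : ℕ → Polynomial A) (hdeg : ∀ i, (p i).natDegree ≤ n')
    (m : ℕ) (d nn : Fin m → ℕ) (hd : ∀ ν, 0 < d ν) (hnn : ∀ ν, 0 < nn ν)
    (hn' : n' = ∑ ν, d ν * nn ν)
    (a : (ν : Fin m) → Fin (d ν) → L)
    (ha : Function.Injective fun q : Σ ν, Fin (d ν) => a q.1 q.2)
    (fp : Fin m → Polynomial A) (hfmonic : ∀ ν, (fp ν).Monic)
    (hffac : ∀ ν, (fp ν).map φ = ∏ ℓ, (X - C (a ν ℓ)))
    (hF0 : p 0 = ∏ ν, fp ν ^ nn ν)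
    (s : (ν : Fin m) → (ℓ : Fin (d ν)) → Fin (nn ν) → HahnSeries ℚ L)
    (hs : ∀ ν ℓ i, HasConst (s ν ℓ i) (a ν ℓ))
    (hsplit : (fam n' p).map (Phi φ) = ∏ ν, ∏ ℓ, ∏ i, (X - C (s ν ℓ i)))
    (hΔ : rootsSep (fun q : Σ ν : Fin m, Fin (d ν) × Fin (nn ν) =>
        s q.1 q.2.1 q.2.2) ≠ 0)
    (αp δp : Fin m → Polynomial A) (β : Fin m → ℕ → Polynomial A) (nd : Fin m → ℕ)
    (hZd : ∀ ν, 1 < nn ν →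
      1 ≤ nd ν ∧
      (∀ ℓ, ((αp ν * δp ν).map φ).eval (a ν ℓ) ≠ 0) ∧
      ∀ i ≤ nd ν, αp ν * p i =
        PowerSeries.coeff (R := Polynomial A) i
          ((PowerSeries.mk fun j =>
            if j = 0 then fp ν * β ν 0 else if j < nd ν then β ν j else 0) ^ nn ν) +
          (if i = nd ν then δp ν else 0)) :
    ∃ c : k, c ≠ 0 ∧
      lim0 ((-1 : HahnSeries ℚ L) ^ (n' * (n' - 1) / 2) *
          rootsSep (fun q : Σ ν : Fin m, Fin (d ν) × Fin (nn ν) => s q.1 q.2.1 q.2.2)) =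
        (∏ ν, discOf (a ν) ^ nn ν) *
          (φ (algebraMap k A c) *
            (∏ ν, ∏ ℓ, (((δp ν).map φ).eval (a ν ℓ)) ^ (nn ν - 1)) *
            (∏ ν, ∏ ν' ∈ Finset.univ.erase ν,
              (∏ ℓ, ∏ ℓ', (a ν ℓ - a ν' ℓ')) ^ nn ν') /
            (∏ ν, ∏ ℓ, (((αp ν).map φ).eval (a ν ℓ)) ^ (nn ν - 1))) := by
  classical
  set κ : k →+* L := φ.comp (algebraMap k A) with hκ
  set S : (Σ ν : Fin m, Fin (d ν) × Fin (nn ν)) → HahnSeries ℚ L :=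
    fun q => s q.1 q.2.1 q.2.2 with hS
  set M : Fin m → Polynomial A := fun ν => ∏ ν' ∈ Finset.univ.erase ν, fp ν' ^ nn ν' with hM
  have hsplit' : (fam n' p).map (Phi φ) = ∏ q, (X - C (S q)) := by
    rw [hsplit, Fintype.prod_sigma]
    refine Finset.prod_congr rfl fun ν _ => ?_
    rw [Fintype.prod_prod_type]
  have hroot : ∀ q, (fam n' p).eval₂ (Phi φ) (S q) = 0 := by
    intro q
    rw [← Polynomial.eval_map, hsplit', Polynomial.eval_prod]
    exact Finset.prod_eq_zero (Finset.mem_univ q) (by simp)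
  have hsep : rootsSep S = ∏ q, (fam n' p).derivative.eval₂ (Phi φ) (S q) := by
    rw [rootsSep, prod_offDiag_erase (fun q q' => S q - S q')]
    refine Finset.prod_congr rfl fun q _ => ?_
    rw [← deriv_prod_eval, ← hsplit', Polynomial.derivative_map, Polynomial.eval_map]
  have hfe : ∀ ν (x : L), (fp ν).eval₂ φ x = ∏ ℓ, (x - a ν ℓ) := by
    intro ν x
    rw [← Polynomial.eval_map, hffac, Polynomial.eval_prod]
    simp
  have hfa : ∀ ν ℓ, (fp ν).eval₂ φ (a ν ℓ) = 0 := by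
    intro ν ℓ
    rw [hfe]
    exact Finset.prod_eq_zero (Finset.mem_univ ℓ) (by simp)
  have hfd : ∀ ν ℓ, (fp ν).derivative.eval₂ φ (a ν ℓ) =
      ∏ ℓ' ∈ Finset.univ.erase ℓ, (a ν ℓ - a ν ℓ') := by
    intro ν ℓ
    rw [← deriv_prod_eval, ← hffac, Polynomial.derivative_map, Polynomial.eval_map]
  have hfd0 : ∀ ν ℓ, (fp ν).derivative.eval₂ φ (a ν ℓ) ≠ 0 := by
    intro ν ℓ
    rw [hfd, Finset.prod_ne_zero_iff]
    intro ℓ' hℓ' h0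
    have h1 := @ha ⟨ν, ℓ⟩ ⟨ν, ℓ'⟩ (sub_eq_zero.1 h0)
    simp only [Sigma.mk.injEq, heq_eq_eq, true_and] at h1
    exact (Finset.ne_of_mem_erase hℓ') h1.symm
  have hMe : ∀ ν ℓ, (M ν).eval₂ φ (a ν ℓ) =
      ∏ ν' ∈ Finset.univ.erase ν, (∏ ℓ', (a ν ℓ - a ν' ℓ')) ^ nn ν' := by
    intro ν ℓ
    rw [hM, Polynomial.eval₂_finsetProd]
    refine Finset.prod_congr rfl fun ν' _ => ?_
    rw [Polynomial.eval₂_pow, hfe]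
  have hM0 : ∀ ν ℓ, (M ν).eval₂ φ (a ν ℓ) ≠ 0 := by
    intro ν ℓ
    rw [hMe, Finset.prod_ne_zero_iff]
    intro ν' hν'
    apply pow_ne_zero
    rw [Finset.prod_ne_zero_iff]
    intro ℓ' _ h0
    have h1 := @ha ⟨ν, ℓ⟩ ⟨ν', ℓ'⟩ (sub_eq_zero.1 h0)
    simp only [Sigma.mk.injEq] at h1
    exact (Finset.ne_of_mem_erase hν') h1.1.symm
  have hloc : ∀ ν (ℓ : Fin (d ν)), ∃ c : k, c ≠ 0 ∧
      ∏ i, lim0 ((fam n' p).derivative.eval₂ (Phi φ) (s ν ℓ i)) =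
      κ c * ((δp ν).eval₂ φ (a ν ℓ) ^ (nn ν - 1) / (αp ν).eval₂ φ (a ν ℓ) ^ (nn ν - 1)) *
        (fp ν).derivative.eval₂ φ (a ν ℓ) ^ nn ν * (M ν).eval₂ φ (a ν ℓ) := by
    intro ν ℓ
    refine local_all κ φ n' p hdeg (fp ν) (M ν) (αp ν) (δp ν) (β ν) (nd ν) (nn ν) (hnn ν)
      (hfmonic ν) ?_ (hs ν ℓ) (fun i => hroot ⟨ν, ℓ, i⟩) (hfa ν ℓ) (hfd0 ν ℓ) (hM0 ν ℓ) ?_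
    · rw [hF0, hM]
      exact (Finset.mul_prod_erase Finset.univ _ (Finset.mem_univ ν)).symm
    · intro h1
      obtain ⟨h2, h3, h4⟩ := hZd ν h1
      refine ⟨h2, ?_, h4⟩
      rw [← Polynomial.eval_map]
      exact h3 ℓ
  choose c hc0 hc using hloc
  set e : Fin m → ℕ := fun ν =>
    (Finset.univ.filter (fun q : Fin (d ν) × Fin (d ν) => q.1 < q.2)).card with he
  refine ⟨(-1) ^ (n' * (n' - 1) / 2) * (∏ ν, ∏ ℓ, c ν ℓ) * ∏ ν, ((-1) ^ e ν) ^ nn ν, ?_, ?_⟩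
  · refine mul_ne_zero (mul_ne_zero (by simp) ?_) ?_
    · exact Finset.prod_ne_zero_iff.2 fun ν _ => Finset.prod_ne_zero_iff.2 fun ℓ _ => hc0 ν ℓ
    · exact Finset.prod_ne_zero_iff.2 fun ν _ => by simp
  have hD : ∀ ν, ∏ ℓ, (fp ν).derivative.eval₂ φ (a ν ℓ) ^ nn ν =
      ((-1) ^ e ν) ^ nn ν * discOf (a ν) ^ nn ν := by
    intro ν
    rw [Finset.prod_pow, ← mul_pow, ← disc_sign, Finset.prod_congr rfl fun ℓ _ => hfd ν ℓ]
  have hMM : ∀ ν, ∏ ℓ, (M ν).eval₂ φ (a ν ℓ) = ∏ ν' ∈ Finset.univ.erase ν,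
      (∏ ℓ, ∏ ℓ', (a ν ℓ - a ν' ℓ')) ^ nn ν' := by
    intro ν
    rw [Finset.prod_congr rfl fun ℓ _ => hMe ν ℓ, Finset.prod_comm]
    exact Finset.prod_congr rfl fun ν' _ => Finset.prod_pow _ _ _
  have hκc : φ (algebraMap k A ((-1) ^ (n' * (n' - 1) / 2) * (∏ ν, ∏ ℓ, c ν ℓ) *
      ∏ ν, ((-1) ^ e ν) ^ nn ν)) = (-1) ^ (n' * (n' - 1) / 2) * (∏ ν, ∏ ℓ, κ (c ν ℓ)) *
      ∏ ν, ((-1) ^ e ν) ^ nn ν := by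
    change κ _ = _
    simp only [map_mul, map_prod, map_pow, map_neg, map_one]
  rw [hκc, hsep, lim0_mul, lim0_neg_one_pow, lim0_prod, Fintype.prod_sigma]
  simp only [Fintype.prod_prod_type, hS, hc, Finset.prod_mul_distrib, Finset.prod_div_distrib, hD,
    hMM, Polynomial.eval_map]
  ring
end
end
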